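/- Let G be a group with identity e and let ((A_g)_{g∈G}, (Ψ_g)_{g∈G}) be a Parseval factorable weak operator-valued frame in B(H,H₀) indexed by G. Then there exists a unitary representation π of G on H such that A_g = A_e ∘ π(g⁻¹) and Ψ_g = Ψ_e ∘ π(g⁻¹) for all g ∈ G, if and only if for all g, p, q ∈ G one has A_{gp} A_{gq}* = A_p A_q*, A_{gp} Ψ_{gq}* = A_p Ψ_q*, and Ψ_{gp} Ψ_{gq}* = Ψ_p Ψ_q*. -/

import Mathlib

open scoped ENNReal

/-!
Let `λ` be the representation of `G` on `ℓ²(G, H₀)` by translations. A unitary representation `π`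
satisfies `A_g = A_e π(g⁻¹)` and `Ψ_g = Ψ_e π(g⁻¹)` precisely when `θ_A` and `θ_Ψ` intertwine `π`
with `λ`. Intertwiners compose with their adjoints to operators commuting with `λ`, and the entries
of `θ_A θ_Ψ*`, viewed as an operator matrix, are the `A_p Ψ_q*`. Conversely, if `λ` commutes with
`θ_A θ_Ψ*` and `θ_Ψ θ_Ψ*`, then `π(g) = θ_Ψ* λ(g) θ_A` is intertwined with `λ` by both analysis
operators. It is multiplicative because `θ_A` is injective, and unitary because
`⟪θ_A x, θ_Ψ y⟫ = ⟪x, y⟫`.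
-/

open scoped InnerProductSpace InnerProduct
open Function

section Translation

variable {ι κ E : Type*} [NormedAddCommGroup E] {p : ℝ≥0∞}

theorem memℓp_comp_equiv (σ : κ ≃ ι) {f : ι → E} (hf : Memℓp f p) :
    Memℓp (fun i => f (σ i)) p := by
  rcases p.trichotomy with rfl | rfl | hp
  · exact memℓp_zero (hf.finite_dsupport.preimage σ.injective.injOn)
  · exact memℓp_infty (hf.bddAbove.mono (Set.range_comp_subset_range σ fun i => ‖f i‖))
  · exact memℓp_gen (σ.summable_iff.mpr (hf.summable hp))

theorem lp_norm_eq_of_equiv (σ : κ ≃ ι) {x : lp (fun _ : κ => E) p}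
    {y : lp (fun _ : ι => E) p} (hxy : ∀ i, x i = y (σ i)) : ‖x‖ = ‖y‖ := by
  rcases p.trichotomy with rfl | rfl | hp
  · rw [lp.norm_eq_card_dsupport, lp.norm_eq_card_dsupport, Nat.cast_inj]
    exact Finset.card_equiv σ fun i => by simp [hxy]
  · simp only [lp.norm_eq_ciSup, hxy]
    exact σ.iSup_comp (g := fun i => ‖y i‖)
  · simp only [lp.norm_eq_tsum_rpow hp, hxy]
    rw [σ.tsum_eq fun i => ‖y i‖ ^ p.toReal]

variable {G : Type*} [Group G] [MulAction G ι] [Fact (1 ≤ p)]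

variable (ι E p) in
/-- The representation of `G` on `ℓᵖ(ι, E)` by translations, `(g • x) i = x (g⁻¹ • i)`. For the
action of `G` on itself by left multiplication it is the left regular representation. -/
def lpTranslation (𝕜 : Type*) [NormedRing 𝕜] [Module 𝕜 E] [IsBoundedSMul 𝕜 E] :
    G →* (lp (fun _ : ι => E) p ≃ₗᵢ[𝕜] lp (fun _ : ι => E) p) where
  toFun g :=
    { toFun x := ⟨fun i => x (g⁻¹ • i), memℓp_comp_equiv (MulAction.toPerm g⁻¹) (lp.memℓp x)⟩
      invFun x := ⟨fun i => x (g • i), memℓp_comp_equiv (MulAction.toPerm g) (lp.memℓp x)⟩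
      map_add' _ _ := rfl
      map_smul' _ _ := rfl
      left_inv x := lp.ext <| funext fun i => congrArg x (inv_smul_smul g i)
      right_inv x := lp.ext <| funext fun i => congrArg x (smul_inv_smul g i)
      norm_map' _ := lp_norm_eq_of_equiv (MulAction.toPerm g⁻¹) fun _ => rfl }
  map_one' := LinearIsometryEquiv.ext fun x => lp.ext <| funext fun i =>
    congrArg x (by rw [inv_one, one_smul])
  map_mul' g g' := LinearIsometryEquiv.ext fun x => lp.ext <| funext fun i =>
    congrArg x (by rw [mul_inv_rev, mul_smul])

variable {𝕜 : Type*} [NormedRing 𝕜] [Module 𝕜 E] [IsBoundedSMul 𝕜 E]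

theorem lpTranslation_apply (g : G) (x : lp (fun _ : ι => E) p) (i : ι) :
    lpTranslation ι E p 𝕜 g x i = x (g⁻¹ • i) :=
  rfl

theorem lpTranslation_apply_smul (g : G) (x : lp (fun _ : ι => E) p) (i : ι) :
    lpTranslation ι E p 𝕜 g x (g • i) = x i := by
  rw [lpTranslation_apply, inv_smul_smul]

theorem lpTranslation_single [DecidableEq ι] (g : G) (i : ι) (v : E) :
    lpTranslation ι E p 𝕜 g (lp.single p i v) = lp.single p (g • i) v := by
  ext j
  simp only [lpTranslation_apply, lp.single_apply, Pi.single_apply, inv_smul_eq_iff]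

theorem commute_lpTranslation_iff [DecidableEq ι] (hp : p ≠ ∞)
    (T : lp (fun _ : ι => E) p →L[𝕜] lp (fun _ : ι => E) p) (g : G) :
    Function.Commute T (lpTranslation ι E p 𝕜 g) ↔
      ∀ i j v, T (lp.single p (g • j) v) (g • i) = T (lp.single p j v) i := by
  constructor
  · intro hT i j v
    rw [← lpTranslation_single (𝕜 := 𝕜), hT.eq, lpTranslation_apply_smul]
  · intro hT
    let U : lp (fun _ : ι => E) p →L[𝕜] lp (fun _ : ι => E) p :=
      (lpTranslation ι E p 𝕜 g).toContinuousLinearEquiv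
    suffices T ∘L U = U ∘L T from DFunLike.congr_fun this
    refine lp.ext_continuousLinearMap hp fun j => ContinuousLinearMap.ext fun v => ?_
    refine lp.ext <| funext fun i => ?_
    obtain ⟨i, rfl⟩ := MulAction.surjective g i
    calc T (lpTranslation ι E p 𝕜 g (lp.single p j v)) (g • i)
        = T (lp.single p j v) i := by rw [lpTranslation_single, hT]
      _ = lpTranslation ι E p 𝕜 g (T (lp.single p j v)) (g • i) :=
        (lpTranslation_apply_smul ..).symm

theorem forall_semiconj_lpTranslation_iff {H : Type*} [SeminormedAddCommGroup H] [Module 𝕜 H]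
    {B : ι → H → E} {θ : H → lp (fun _ : ι => E) p} (hθ : ∀ h i, θ h i = B i h)
    (π : G →* (H ≃ₗᵢ[𝕜] H)) :
    (∀ g, Semiconj θ (π g) (lpTranslation ι E p 𝕜 g)) ↔
      ∀ g i h, B (g • i) h = B i (π g⁻¹ h) := by
  constructor
  · intro hsemi g i h
    rw [← hθ, ← hθ, (hsemi g⁻¹).eq, lpTranslation_apply, inv_inv]
  · intro hB g h
    ext i
    rw [lpTranslation_apply, hθ, hθ, hB, inv_inv]

end Translation

section Intertwining

variable {𝕜 H K : Type*} [RCLike 𝕜]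
  [NormedAddCommGroup H] [InnerProductSpace 𝕜 H] [CompleteSpace H]
  [NormedAddCommGroup K] [InnerProductSpace 𝕜 K] [CompleteSpace K]

theorem semiconj_adjoint {T : H →L[𝕜] K} {V : H ≃ₗᵢ[𝕜] H} {U : K ≃ₗᵢ[𝕜] K}
    (hT : Semiconj T V U) : Semiconj (T†) U V := fun y => by
  refine ext_inner_right 𝕜 fun w => ?_
  obtain ⟨x, rfl⟩ := V.surjective w
  calc ⟪(T†) (U y), V x⟫_𝕜
      = ⟪U y, U (T x)⟫_𝕜 := by rw [ContinuousLinearMap.adjoint_inner_left, hT.eq]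
    _ = ⟪V ((T†) y), V x⟫_𝕜 := by
      rw [U.inner_map_map, V.inner_map_map, ContinuousLinearMap.adjoint_inner_left]

variable {θ φ : H →L[𝕜] K}

theorem inner_map_map_of_adjoint_comp_eq_id (hθφ : φ† ∘L θ = .id 𝕜 H) (x y : H) :
    ⟪θ x, φ y⟫_𝕜 = ⟪x, y⟫_𝕜 := by
  rw [← ContinuousLinearMap.adjoint_inner_left, ← ContinuousLinearMap.comp_apply, hθφ,
    ContinuousLinearMap.id_apply]

theorem injective_of_adjoint_comp_eq_id (hθφ : φ† ∘L θ = .id 𝕜 H) : Injective θ :=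
  LeftInverse.injective (g := φ†) fun x => DFunLike.congr_fun hθφ x

variable (θ φ) in
/-- The compression `φ* T θ` to `H` of an operator `T` on `K`, for a factorization `φ* θ = 1` of
the identity of `H` through `K`. -/
noncomputable def compression (T : K →L[𝕜] K) : H →L[𝕜] H := φ† ∘L T ∘L θ

theorem semiconj_compression (hθφ : φ† ∘L θ = .id 𝕜 H) {χ : H →L[𝕜] K} {T : K →L[𝕜] K}
    (hT : Function.Commute (χ ∘L φ†) T) : Semiconj χ (compression θ φ T) T := fun x =>
  calc χ ((φ†) (T (θ x)))
      = T (χ ((φ†) (θ x))) := hT (θ x)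
    _ = T (χ x) := by rw [← ContinuousLinearMap.comp_apply (φ†), hθφ, ContinuousLinearMap.id_apply]

/-- The representation `g ↦ φ* U(g) θ` on `H` by bounded operators, obtained by compressing a
representation `U` on `K` that commutes with the idempotent `θ φ*`. -/
noncomputable def compressionHom {M : Type*} [Monoid M] {U : M →* (K ≃ₗᵢ[𝕜] K)}
    (hθφ : φ† ∘L θ = .id 𝕜 H) (hU : ∀ g, Function.Commute (θ ∘L φ†) (U g)) :
    M →* (H →L[𝕜] H) where
  toFun g := compression θ φ (U g : K →L[𝕜] K)
  map_one' := by
    ext x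
    simpa [compression] using DFunLike.congr_fun hθφ x
  map_mul' g g' := by
    have intertwines (k : M) : Semiconj θ (compression θ φ (U k : K →L[𝕜] K)) (U k) :=
      semiconj_compression hθφ (hU k)
    ext x
    apply injective_of_adjoint_comp_eq_id hθφ
    calc θ (compression θ φ (U (g * g') : K →L[𝕜] K) x)
        = U g (U g' (θ x)) := by
          rw [(intertwines _).eq, map_mul, LinearIsometryEquiv.coe_mul, comp_apply]
      _ = θ (compression θ φ (U g : K →L[𝕜] K) (compression θ φ (U g' : K →L[𝕜] K) x)) := by
          rw [(intertwines g).eq, (intertwines g').eq]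

variable {G : Type*} [Group G] {U : G →* (K ≃ₗᵢ[𝕜] K)}

theorem compressionHom_mem_unitary (hθφ : φ† ∘L θ = .id 𝕜 H)
    (hUθ : ∀ g, Function.Commute (θ ∘L φ†) (U g)) (hUφ : ∀ g, Function.Commute (φ ∘L φ†) (U g))
    (g : G) : compressionHom hθφ hUθ g ∈ unitary (H →L[𝕜] H) := by
  set V := compressionHom hθφ hUθ g
  have hθ : Semiconj θ V (U g) := semiconj_compression hθφ (hUθ g)
  have hφ : Semiconj φ V (U g) := semiconj_compression hθφ (hUφ g)
  have inner_map (x y : H) : ⟪V x, V y⟫_𝕜 = ⟪x, y⟫_𝕜 :=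
    calc ⟪V x, V y⟫_𝕜
        = ⟪U g (θ x), U g (φ y)⟫_𝕜 := by
          rw [← inner_map_map_of_adjoint_comp_eq_id hθφ, hθ.eq, hφ.eq]
      _ = ⟪x, y⟫_𝕜 := by
          rw [(U g).inner_map_map, inner_map_map_of_adjoint_comp_eq_id hθφ]
  refine ((Group.isUnit g).map _).mem_unitary_of_star_mul_self ?_
  exact V.inner_map_map_iff_adjoint_comp_self.mp inner_map

theorem exists_semiconj_of_commute (hθφ : φ† ∘L θ = .id 𝕜 H)
    (hUθ : ∀ g, Function.Commute (θ ∘L φ†) (U g)) (hUφ : ∀ g, Function.Commute (φ ∘L φ†) (U g)) :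
    ∃ π : G →* (H ≃ₗᵢ[𝕜] H), ∀ g, Semiconj θ (π g) (U g) ∧ Semiconj φ (π g) (U g) :=
  ⟨Unitary.linearIsometryEquiv.toMonoidHom.comp
      ((compressionHom hθφ hUθ).codRestrict _ (compressionHom_mem_unitary hθφ hUθ hUφ)),
    fun g => ⟨semiconj_compression hθφ (hUθ g), semiconj_compression hθφ (hUφ g)⟩⟩

end Intertwining

section AnalysisOperator

variable {𝕜 H E ι : Type*} [RCLike 𝕜]
  [NormedAddCommGroup H] [InnerProductSpace 𝕜 H] [CompleteSpace H]
  [NormedAddCommGroup E] [InnerProductSpace 𝕜 E] [CompleteSpace E]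
  {B C : ι → H →L[𝕜] E} {θ φ : H →L[𝕜] lp (fun _ : ι => E) 2}
  {G : Type*} [Group G] [MulAction G ι]

theorem adjoint_apply_single [DecidableEq ι] (hφ : ∀ h i, φ h i = C i h) (i : ι) (v : E) :
    (φ†) (lp.single 2 i v) = ((C i)†) v :=
  ext_inner_right 𝕜 fun h => by
    rw [ContinuousLinearMap.adjoint_inner_left, ContinuousLinearMap.adjoint_inner_left,
      lp.inner_single_left, hφ]

theorem commute_comp_adjoint_lpTranslation_iff (hθ : ∀ h i, θ h i = B i h)
    (hφ : ∀ h i, φ h i = C i h) (g : G) :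
    Function.Commute (θ ∘L φ†) (lpTranslation ι E 2 𝕜 g) ↔
      ∀ i j, B (g • i) ∘L (C (g • j))† = B i ∘L (C j)† := by
  classical
  rw [commute_lpTranslation_iff (by norm_num : (2 : ℝ≥0∞) ≠ ∞)]
  simp only [ContinuousLinearMap.ext_iff, ContinuousLinearMap.comp_apply, hθ,
    adjoint_apply_single hφ]

end AnalysisOperator

theorem forall_apply_mul_iff_forall_apply_one {𝕜 H E G : Type*} [Semiring 𝕜]
    [SeminormedAddCommGroup H] [Module 𝕜 H] [Group G] (B : G → H → E) (π : G →* (H ≃ₗᵢ[𝕜] H)) :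
    (∀ g p h, B (g * p) h = B p (π g⁻¹ h)) ↔ ∀ g h, B g h = B 1 (π g⁻¹ h) := by
  refine ⟨fun hB g h => by rw [← hB, mul_one], fun hB g p h => ?_⟩
  rw [hB (g * p), hB p, mul_inv_rev, map_mul, LinearIsometryEquiv.coe_mul, comp_apply]

theorem parseval_factorable_weak_OVF_group_representation_general
    {𝕜 H H₀ ι G : Type*} [RCLike 𝕜]
    [NormedAddCommGroup H] [InnerProductSpace 𝕜 H] [CompleteSpace H]
    [NormedAddCommGroup H₀] [InnerProductSpace 𝕜 H₀] [CompleteSpace H₀]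
    [Group G] [MulAction G ι]
    {A Ψ : ι → H →L[𝕜] H₀} {θA θΨ : H →L[𝕜] lp (fun _ : ι => H₀) 2}
    (hθA : ∀ h i, θA h i = A i h) (hθΨ : ∀ h i, θΨ h i = Ψ i h)
    (hPar : θΨ† ∘L θA = .id 𝕜 H) :
    [∃ π : G →* (H ≃ₗᵢ[𝕜] H), ∀ g : G,
        (∀ i h, A (g • i) h = A i (π g⁻¹ h)) ∧ (∀ i h, Ψ (g • i) h = Ψ i (π g⁻¹ h)),
      ∀ (g : G) (p q : ι),
        A (g • p) ∘L (A (g • q))† = A p ∘L (A q)† ∧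
        A (g • p) ∘L (Ψ (g • q))† = A p ∘L (Ψ q)† ∧
        Ψ (g • p) ∘L (Ψ (g • q))† = Ψ p ∘L (Ψ q)†,
      ∀ (g : G) (p q : ι),
        A (g • p) ∘L (Ψ (g • q))† = A p ∘L (Ψ q)† ∧
        Ψ (g • p) ∘L (Ψ (g • q))† = Ψ p ∘L (Ψ q)†].TFAE := by
  simp only [forall_and, ← forall_semiconj_lpTranslation_iff hθA,
    ← forall_semiconj_lpTranslation_iff hθΨ, ← commute_comp_adjoint_lpTranslation_iff hθA hθA,
    ← commute_comp_adjoint_lpTranslation_iff hθA hθΨ,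
    ← commute_comp_adjoint_lpTranslation_iff hθΨ hθΨ]
  tfae_have 1 → 2 := fun ⟨_, hA, hΨ⟩ =>
    ⟨fun g => (semiconj_adjoint (hA g)).trans (hA g),
      fun g => (semiconj_adjoint (hΨ g)).trans (hA g),
      fun g => (semiconj_adjoint (hΨ g)).trans (hΨ g)⟩
  tfae_have 2 → 3 := And.right
  tfae_have 3 → 1 := fun ⟨hAΨ, hΨΨ⟩ => by
    simpa only [forall_and] using exists_semiconj_of_commute hPar hAΨ hΨΨ
  tfae_finish

/-- **Group-generated Parseval factorable weak OVFs.** Let `((A_g), (Ψ_g))` be a Parseval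
factorable weak operator-valued frame in `B(H,H₀)` indexed by a group `G` (analysis operators
`θA, θΨ : H → ℓ²(G,H₀)` with `θΨ* θA = I`).  Then there is a unitary representation `π` of `G`
on `H` with `A_g = A_e ∘ π(g⁻¹)` and `Ψ_g = Ψ_e ∘ π(g⁻¹)` for all `g` iff
`A_{gp} A_{gq}* = A_p A_q*`, `A_{gp} Ψ_{gq}* = A_p Ψ_q*`, `Ψ_{gp} Ψ_{gq}* = Ψ_p Ψ_q*` for all
`g, p, q ∈ G`. -/
theorem parseval_factorable_weak_OVF_group_representation
    {H H₀ : Type*} [NormedAddCommGroup H] [InnerProductSpace ℂ H] [CompleteSpace H]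
    [NormedAddCommGroup H₀] [InnerProductSpace ℂ H₀] [CompleteSpace H₀]
    {G : Type*} [Group G]
    (A Ψ : G → H →L[ℂ] H₀)
    (θA θΨ : H →L[ℂ] lp (fun _ : G => H₀) 2)
    (hθA : ∀ (h : H) (g : G), θA h g = A g h)
    (hθΨ : ∀ (h : H) (g : G), θΨ h g = Ψ g h)
    (hPar : (ContinuousLinearMap.adjoint θΨ).comp θA = ContinuousLinearMap.id ℂ H) :
    (∃ π : G →* (H ≃ₗᵢ[ℂ] H),
        ∀ g : G, (∀ h : H, A g h = A 1 (π (g⁻¹) h)) ∧ (∀ h : H, Ψ g h = Ψ 1 (π (g⁻¹) h))) ↔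
    (∀ g p q : G,
        (A (g * p)).comp (ContinuousLinearMap.adjoint (A (g * q))) =
          (A p).comp (ContinuousLinearMap.adjoint (A q)) ∧
        (A (g * p)).comp (ContinuousLinearMap.adjoint (Ψ (g * q))) =
          (A p).comp (ContinuousLinearMap.adjoint (Ψ q)) ∧
        (Ψ (g * p)).comp (ContinuousLinearMap.adjoint (Ψ (g * q))) =
          (Ψ p).comp (ContinuousLinearMap.adjoint (Ψ q))) := by
  have invariance_iff :=
    (parseval_factorable_weak_OVF_group_representation_general (G := G) hθA hθΨ hPar).out 0 1
  simpa only [smul_eq_mul, forall_and, forall_apply_mul_iff_forall_apply_one (fun g => ⇑(A g)),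
    forall_apply_mul_iff_forall_apply_one (fun g => ⇑(Ψ g))] using invariance_iff
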